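/- Exact (non-asymptotic) confidence interval: for every p ∈ [0,1], every α ∈ (0,1) and every n ≥ 2, ℙ( |p̂_n − p| ≤ 2·√(3 n log(2/α))/V_n ) ≥ 1 − α. Equivalently, for every x > 0 one has ℙ( V_n·|p̂_n − p| ≥ 2 n x ) ≤ 2·exp(−n x²/3). -/

import Mathlib

open MeasureTheory ProbabilityTheory Filter Finset
open scoped BoundedContinuousFunction ENNReal NNReal Topology

noncomputable section

variable {Ω : Type*}

/-- Position of the elephant random walk: `S n = X 1 + ⋯ + X n`. -/
def erwS (X : ℕ → Ω → ℝ) (n : ℕ) (ω : Ω) : ℝ :=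
  ∑ k ∈ Finset.Icc 1 n, X k ω

/-- `V n = 4 ∑_{k=1}^{n-1} (S k / k)²`, the approximate conditional Fisher information. -/
def erwV (X : ℕ → Ω → ℝ) (n : ℕ) (ω : Ω) : ℝ :=
  4 * ∑ k ∈ Finset.Icc 1 (n - 1), (erwS X k ω / k) ^ 2

/-- The quasi-maximum likelihood estimator `p̂ n` of the memory parameter. -/
def erwPhat (X : ℕ → Ω → ℝ) (n : ℕ) (ω : Ω) : ℝ :=
  (∑ k ∈ Finset.Icc 1 (n - 1), (erwS X k ω / k) * (X (k + 1) ω + erwS X k ω / k)) /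
    (2 * ∑ k ∈ Finset.Icc 1 (n - 1), (erwS X k ω / k) ^ 2)

/-- The elephant random walk hypotheses with memory parameter `p ∈ [0,1]`:
the steps take values in `{-1, 1}`, are adapted to the filtration `ℱ`
(which plays the role of `σ(X_1, …, X_n)`), and
`E[X_{n+1} | ℱ_n] = (2p - 1) · S_n / n` almost surely. -/
def IsERW {m0 : MeasurableSpace Ω} (μ : Measure Ω) (ℱ : Filtration ℕ m0)
    (X : ℕ → Ω → ℝ) (p : ℝ) : Prop :=
  0 ≤ p ∧ p ≤ 1 ∧
  (∀ n, 1 ≤ n → ∀ ω, X n ω = 1 ∨ X n ω = -1) ∧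
  (∀ n, 1 ≤ n → Measurable[ℱ n] (X n)) ∧
  (∀ n, 1 ≤ n → μ[X (n + 1) | ℱ n] =ᵐ[μ] fun ω => (2 * p - 1) * (erwS X n ω / n))

/-- Hoeffding's lemma for a two-point law on `{-1, 1}` with mean `m`. -/
lemma erw_two_point (m l : ℝ) (h1 : -1 ≤ m) (h2 : m ≤ 1) :
    Real.exp (-(l * m)) * (Real.cosh l + m * Real.sinh l) ≤ Real.exp (l ^ 2 / 2) := by
  let ν : Measure ℝ := ENNReal.ofReal ((1 + m) / 2) • Measure.dirac (1 : ℝ) +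
    ENNReal.ofReal ((1 - m) / 2) • Measure.dirac (-1 : ℝ)
  have hp : 0 ≤ (1 + m) / 2 := by linarith
  have hq : 0 ≤ (1 - m) / 2 := by linarith
  have hint : ∀ f : ℝ → ℝ, ∫ x, f x ∂ν = (1 + m) / 2 * f 1 + (1 - m) / 2 * f (-1) := by
    intro f
    have hd : ∀ c : ℝ, Integrable f (Measure.dirac c) := fun c =>
      integrable_dirac (by simp)
    rw [integral_add_measure ((hd _).smul_measure (by simp)) ((hd _).smul_measure (by simp)),
      integral_smul_measure, integral_smul_measure, integral_dirac, integral_dirac,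
      ENNReal.toReal_ofReal hp, ENNReal.toReal_ofReal hq]
    simp
  have : IsProbabilityMeasure ν := ⟨by
    simp only [ν, Measure.add_apply, Measure.smul_apply, measure_univ, smul_eq_mul, mul_one]
    rw [← ENNReal.ofReal_add hp hq]
    rw [← add_div]
    norm_num⟩
  have hb : ∀ᵐ x ∂ν, (fun x : ℝ => x) x ∈ Set.Icc (-1 : ℝ) 1 := by
    have hms : MeasurableSet {x : ℝ | x ∈ Set.Icc (-1 : ℝ) 1} := measurableSet_Icc
    simp only [ν]
    rw [ae_add_measure_iff]
    constructor
    · refine Measure.ae_smul_measure ?_ _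
      rw [ae_dirac_iff hms]; norm_num
    · refine Measure.ae_smul_measure ?_ _
      rw [ae_dirac_iff hms]; norm_num
  have h := (hasSubgaussianMGF_of_mem_Icc (μ := ν) (X := fun x : ℝ => x)
    measurable_id.aemeasurable hb).mgf_le l
  rw [mgf, hint, hint] at h
  have hc : (((‖(1 : ℝ) - -1‖₊ / 2) ^ 2 : ℝ≥0) : ℝ) = 1 := by
    have : (1 : ℝ) - -1 = 2 := by norm_num
    rw [this]; simp
  rw [hc, one_mul] at h
  refine le_trans (le_of_eq ?_) h
  have e1 : l * (1 - ((1 + m) / 2 * 1 + (1 - m) / 2 * -1)) = -(l * m) + l := by ring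
  have e2 : l * (-1 - ((1 + m) / 2 * 1 + (1 - m) / 2 * -1)) = -(l * m) + -l := by ring
  rw [e1, e2, Real.exp_add, Real.exp_add, Real.cosh_eq, Real.sinh_eq]
  ring

/-- One step of the Azuma–Hoeffding recursion. -/
lemma erw_step {m m0 : MeasurableSpace Ω} (μ : Measure Ω) [IsProbabilityMeasure μ]
    (hm : m ≤ m0) (W s Y : Ω → ℝ) (a C t : ℝ) (ha1 : -1 ≤ a) (ha2 : a ≤ 1)
    (hW : Measurable[m] W) (hs : Measurable[m] s) (hY : Measurable[m0] Y)
    (hWb : ∀ ω, |W ω| ≤ C) (hsb : ∀ ω, |s ω| ≤ 1) (hY1 : ∀ ω, Y ω = 1 ∨ Y ω = -1)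
    (hE : μ[Y | m] =ᵐ[μ] fun ω => a * s ω) :
    ∫ ω, Real.exp (t * (W ω + s ω * (Y ω - a * s ω))) ∂μ ≤
      Real.exp (t ^ 2 / 2) * ∫ ω, Real.exp (t * W ω) ∂μ := by
  have hexpb : ∀ ω, Real.exp (t * W ω) ≤ Real.exp (|t| * C) := by
    intro ω
    apply Real.exp_le_exp.2
    calc t * W ω ≤ |t * W ω| := le_abs_self _
      _ = |t| * |W ω| := abs_mul _ _
      _ ≤ |t| * C := mul_le_mul_of_nonneg_left (hWb ω) (abs_nonneg _)
  have hintW : Integrable (fun ω => Real.exp (t * W ω)) μ := by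
    refine Integrable.of_bound (C := Real.exp (|t| * C)) ?_ ?_
    · exact (Real.measurable_exp.comp ((hW.mono hm le_rfl).const_mul t)).aestronglyMeasurable
    · exact Eventually.of_forall fun ω => by
        rw [Real.norm_of_nonneg (Real.exp_pos _).le]; exact hexpb ω
  have has : ∀ ω, |a * s ω| ≤ 1 := fun ω => by
    rw [abs_mul]
    exact mul_le_one₀ (abs_le.2 ⟨ha1, ha2⟩) (abs_nonneg _) (hsb ω)
  let D : Ω → ℝ := fun ω => Real.exp (-(t * s ω * (a * s ω)))
  let A : Ω → ℝ := fun ω => Real.exp (t * W ω) * D ω * Real.cosh (t * s ω)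
  let B : Ω → ℝ := fun ω => Real.exp (t * W ω) * D ω * Real.sinh (t * s ω)
  have hts : ∀ ω, |t * s ω| ≤ |t| := fun ω => by
    rw [abs_mul]; exact mul_le_of_le_one_right (abs_nonneg _) (hsb ω)
  have hDb : ∀ ω, D ω ≤ Real.exp |t| := fun ω => by
    apply Real.exp_le_exp.2
    refine (neg_le_abs _).trans ?_
    rw [abs_mul]
    exact (mul_le_of_le_one_right (abs_nonneg _) (has ω)).trans (hts ω)
  have hD0 : ∀ ω, 0 ≤ D ω := fun ω => (Real.exp_pos _).le
  have hcb : ∀ ω, Real.cosh (t * s ω) ≤ Real.cosh t := fun ω => Real.cosh_le_cosh.2 (hts ω)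
  have hsc : ∀ x : ℝ, |Real.sinh x| ≤ Real.cosh x := fun x => by
    rw [abs_le]
    rw [Real.sinh_eq, Real.cosh_eq]
    constructor <;> linarith [Real.exp_pos x, Real.exp_pos (-x)]
  have hmD : Measurable[m] D :=
    Real.measurable_exp.comp ((hs.const_mul t).mul (hs.const_mul a)).neg
  have hmA : Measurable[m] A :=
    ((Real.measurable_exp.comp (hW.const_mul t)).mul hmD).mul
      (Real.continuous_cosh.measurable.comp (hs.const_mul t))
  have hmB : Measurable[m] B :=
    ((Real.measurable_exp.comp (hW.const_mul t)).mul hmD).mul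
      (Real.continuous_sinh.measurable.comp (hs.const_mul t))
  let K : ℝ := Real.exp (|t| * C) * Real.exp |t| * Real.cosh t
  have hAb : ∀ ω, A ω ≤ K := fun ω => by
    have := hexpb ω
    have := hDb ω
    have := hcb ω
    have := hD0 ω
    have := (Real.cosh_pos (t * s ω)).le
    simp only [A, K]
    gcongr
  have hA0 : ∀ ω, 0 ≤ A ω := fun ω =>
    mul_nonneg (mul_nonneg (Real.exp_pos _).le (hD0 ω)) (Real.cosh_pos _).le
  have hBA : ∀ ω, |B ω| ≤ A ω := fun ω => by
    simp only [A, B]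
    rw [abs_mul, abs_of_nonneg (mul_nonneg (Real.exp_pos _).le (hD0 ω))]
    exact mul_le_mul_of_nonneg_left (hsc _) (mul_nonneg (Real.exp_pos _).le (hD0 ω))
  have hYb : ∀ ω, |Y ω| ≤ 1 := fun ω => by
    rcases hY1 ω with h | h <;> rw [h] <;> norm_num
  have hiA : Integrable A μ := Integrable.of_bound (C := K)
    (hmA.mono hm le_rfl).aestronglyMeasurable
    (Eventually.of_forall fun ω => by
      rw [Real.norm_of_nonneg (hA0 ω)]; exact hAb ω)
  have hiY : Integrable Y μ := Integrable.of_bound (C := 1)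
    hY.aestronglyMeasurable (Eventually.of_forall fun ω => by simpa using hYb ω)
  have hiBY : Integrable (B * Y) μ := Integrable.of_bound (C := K)
    ((hmB.mono hm le_rfl).mul hY).aestronglyMeasurable
    (Eventually.of_forall fun ω => by
      rw [Pi.mul_apply, Real.norm_eq_abs, abs_mul]
      exact (mul_le_of_le_one_right (abs_nonneg _) (hYb ω)).trans ((hBA ω).trans (hAb ω)))
  have hiBs : Integrable (fun ω => B ω * (a * s ω)) μ := Integrable.of_bound (C := K)
    ((hmB.mono hm le_rfl).mul ((hs.mono hm le_rfl).const_mul a)).aestronglyMeasurable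
    (Eventually.of_forall fun ω => by
      rw [Real.norm_eq_abs, abs_mul]
      exact (mul_le_of_le_one_right (abs_nonneg _) (has ω)).trans ((hBA ω).trans (hAb ω)))
  have hBY : ∫ ω, (B * Y) ω ∂μ = ∫ ω, B ω * (a * s ω) ∂μ := by
    rw [← integral_condExp hm]
    apply integral_congr_ae
    filter_upwards [condExp_mul_of_stronglyMeasurable_left hmB.stronglyMeasurable hiBY hiY, hE]
      with ω h1 h2
    rw [h1, Pi.mul_apply, h2]
  calc ∫ ω, Real.exp (t * (W ω + s ω * (Y ω - a * s ω))) ∂μ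
      = ∫ ω, (A ω + (B * Y) ω) ∂μ := by
        congr 1; ext ω
        have e : t * (W ω + s ω * (Y ω - a * s ω)) =
            t * W ω + -(t * s ω * (a * s ω)) + t * s ω * Y ω := by ring
        rw [e, Real.exp_add, Real.exp_add]
        simp only [A, B, D, Pi.mul_apply]
        rcases hY1 ω with h | h <;> rw [h]
        · rw [mul_one, ← Real.cosh_add_sinh (t * s ω)]; ring
        · rw [mul_neg, mul_one, ← Real.cosh_sub_sinh (t * s ω)]; ring
    _ = ∫ ω, (A ω + B ω * (a * s ω)) ∂μ := by
        rw [integral_add hiA hiBY, integral_add hiA hiBs, hBY]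
    _ ≤ ∫ ω, Real.exp (t ^ 2 / 2) * Real.exp (t * W ω) ∂μ := by
        apply integral_mono (hiA.add hiBs) (hintW.const_mul _)
        intro ω
        have h := erw_two_point (a * s ω) (t * s ω) (abs_le.1 (has ω)).1 (abs_le.1 (has ω)).2
        have h' : Real.exp ((t * s ω) ^ 2 / 2) ≤ Real.exp (t ^ 2 / 2) := by
          apply Real.exp_le_exp.2
          have := sq_le_sq.2 (hts ω)
          linarith
        have h3 := mul_le_mul_of_nonneg_left (h.trans h') (Real.exp_pos (t * W ω)).le
        simp only [A, B, D, Pi.add_apply]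
        linarith
    _ = _ := integral_const_mul _ _

/-- The martingale `∑_{k=1}^m (S_k/k)(X_{k+1} - a S_k/k)`. -/
def erwM (X : ℕ → Ω → ℝ) (a : ℝ) (m : ℕ) (ω : Ω) : ℝ :=
  ∑ k ∈ Finset.Icc 1 m, (erwS X k ω / k) * (X (k + 1) ω - a * (erwS X k ω / k))

lemma erwS_meas {m0 : MeasurableSpace Ω} (ℱ : Filtration ℕ m0) (X : ℕ → Ω → ℝ)
    (h : ∀ n, 1 ≤ n → Measurable[ℱ n] (X n)) (k n : ℕ) (hk : k ≤ n) :
    Measurable[ℱ n] (fun ω => erwS X k ω / k) := by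
  refine Measurable.div_const ?_ _
  unfold erwS
  refine Finset.measurable_sum _ fun i hi => ?_
  rw [Finset.mem_Icc] at hi
  exact (h i hi.1).mono (ℱ.mono (hi.2.trans hk)) le_rfl

lemma erwS_bound (X : ℕ → Ω → ℝ) (h : ∀ n, 1 ≤ n → ∀ ω, X n ω = 1 ∨ X n ω = -1)
    (k : ℕ) (ω : Ω) : |erwS X k ω / k| ≤ 1 := by
  rw [abs_div, Nat.abs_cast]
  apply div_le_one_of_le₀ _ (Nat.cast_nonneg _)
  unfold erwS
  refine (Finset.abs_sum_le_sum_abs _ _).trans ?_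
  refine (Finset.sum_le_card_nsmul _ _ 1 fun i hi => ?_).trans (by simp)
  rcases h i (Finset.mem_Icc.1 hi).1 ω with h | h <;> rw [h] <;> norm_num

lemma erwM_meas {m0 : MeasurableSpace Ω} (ℱ : Filtration ℕ m0) (X : ℕ → Ω → ℝ) (a : ℝ)
    (h : ∀ n, 1 ≤ n → Measurable[ℱ n] (X n)) (m : ℕ) :
    Measurable[ℱ (m + 1)] (erwM X a m) := by
  unfold erwM
  refine Finset.measurable_sum _ fun i hi => ?_
  rw [Finset.mem_Icc] at hi
  have h1 := erwS_meas ℱ X h i (m + 1) (by omega)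
  exact h1.mul (((h (i + 1) (by omega)).mono (ℱ.mono (by omega)) le_rfl).sub (h1.const_mul a))

lemma erwM_bound (X : ℕ → Ω → ℝ) (a : ℝ) (ha : |a| ≤ 1)
    (h : ∀ n, 1 ≤ n → ∀ ω, X n ω = 1 ∨ X n ω = -1)
    (m : ℕ) (ω : Ω) : |erwM X a m ω| ≤ m * 2 := by
  unfold erwM
  refine (Finset.abs_sum_le_sum_abs _ _).trans ?_
  refine (Finset.sum_le_card_nsmul _ _ 2 fun i hi => ?_).trans (by simp)
  have h1 := erwS_bound X h i ω
  have h2 : |X (i + 1) ω| ≤ 1 := by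
    rcases h (i + 1) (by omega) ω with h | h <;> rw [h] <;> norm_num
  rw [abs_mul]
  have h3 : |a * (erwS X i ω / i)| ≤ 1 := by
    rw [abs_mul]; exact mul_le_one₀ ha (abs_nonneg _) h1
  have h4 := abs_sub (X (i + 1) ω) (a * (erwS X i ω / i))
  nlinarith [abs_nonneg (erwS X i ω / i), abs_nonneg (X (i + 1) ω - a * (erwS X i ω / i))]

lemma erwM_mgf {m0 : MeasurableSpace Ω} (μ : Measure Ω) [IsProbabilityMeasure μ]
    (ℱ : Filtration ℕ m0) (X : ℕ → Ω → ℝ) (p : ℝ) (hERW : IsERW μ ℱ X p) (t : ℝ) (m : ℕ) :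
    mgf (erwM X (2 * p - 1) m) μ t ≤ Real.exp (m * (t ^ 2 / 2)) := by
  obtain ⟨hp0, hp1, hX, hmeas, hE⟩ := hERW
  induction m with
  | zero => simp [mgf, erwM]
  | succ m ih =>
    have ha : |2 * p - 1| ≤ 1 := abs_le.2 ⟨by linarith, by linarith⟩
    have h := erw_step μ (ℱ.le (m + 1)) (erwM X (2 * p - 1) m)
      (fun ω => erwS X (m + 1) ω / ((m + 1 : ℕ) : ℝ)) (X (m + 1 + 1)) (2 * p - 1) (m * 2) t
      (by linarith) (by linarith) (erwM_meas ℱ X _ hmeas m)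
      (erwS_meas ℱ X hmeas (m + 1) (m + 1) le_rfl)
      ((hmeas (m + 1 + 1) (by omega)).mono (ℱ.le _) le_rfl)
      (erwM_bound X _ ha hX m) (erwS_bound X hX (m + 1)) (hX (m + 1 + 1) (by omega))
      (hE (m + 1) (by omega))
    have e : mgf (erwM X (2 * p - 1) (m + 1)) μ t = ∫ ω, Real.exp (t * (erwM X (2 * p - 1) m ω +
        erwS X (m + 1) ω / ((m + 1 : ℕ) : ℝ) * (X (m + 1 + 1) ω - (2 * p - 1) *
          (erwS X (m + 1) ω / ((m + 1 : ℕ) : ℝ))))) ∂μ := by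
      unfold mgf
      congr 1; ext ω
      simp only [erwM]
      rw [Finset.sum_Icc_succ_top (by omega)]
    rw [e]
    refine h.trans ?_
    refine (mul_le_mul_of_nonneg_left ih (Real.exp_pos _).le).trans (le_of_eq ?_)
    rw [← Real.exp_add]
    congr 1
    push_cast
    ring

lemma erwT_pos (X : ℕ → Ω → ℝ) (h : ∀ n, 1 ≤ n → ∀ ω, X n ω = 1 ∨ X n ω = -1)
    (n : ℕ) (hn : 2 ≤ n) (ω : Ω) :
    0 < ∑ k ∈ Finset.Icc 1 (n - 1), (erwS X k ω / k) ^ 2 := by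
  refine Finset.sum_pos' (fun i _ => sq_nonneg _) ⟨1, Finset.mem_Icc.2 ⟨le_rfl, by omega⟩, ?_⟩
  have : erwS X 1 ω = X 1 ω := by simp [erwS]
  rw [this]
  rcases h 1 le_rfl ω with h | h <;> rw [h] <;> norm_num

lemma erwV_mul (X : ℕ → Ω → ℝ) (h : ∀ n, 1 ≤ n → ∀ ω, X n ω = 1 ∨ X n ω = -1)
    (p : ℝ) (n : ℕ) (hn : 2 ≤ n) (ω : Ω) :
    erwV X n ω * |erwPhat X n ω - p| = 2 * |erwM X (2 * p - 1) (n - 1) ω| := by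
  have hT := erwT_pos X h n hn ω
  have hV : 0 ≤ erwV X n ω := by unfold erwV; linarith
  have h2 : (2 : ℝ) = |2| := by norm_num
  rw [h2, ← abs_mul, ← abs_of_nonneg hV, ← abs_mul]
  rw [← h2]
  congr 1
  have hM : erwM X (2 * p - 1) (n - 1) ω =
      ∑ k ∈ Finset.Icc 1 (n - 1), (erwS X k ω / k) * (X (k + 1) ω + erwS X k ω / k) -
      2 * p * ∑ k ∈ Finset.Icc 1 (n - 1), (erwS X k ω / k) ^ 2 := by
    unfold erwM
    rw [Finset.mul_sum, ← Finset.sum_sub_distrib]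
    refine Finset.sum_congr rfl fun k _ => ?_
    ring
  rw [hM]
  unfold erwV erwPhat
  generalize (∑ k ∈ Finset.Icc 1 (n - 1), (erwS X k ω / k) ^ 2) = T at *
  field_simp
  ring

lemma erw_tail {m0 : MeasurableSpace Ω} (μ : Measure Ω) [IsProbabilityMeasure μ]
    (ℱ : Filtration ℕ m0) (X : ℕ → Ω → ℝ) (p : ℝ) (hERW : IsERW μ ℱ X p)
    (n : ℕ) (hn : 2 ≤ n) (x : ℝ) (hx : 0 < x) :
    μ.real {ω | 2 * n * x ≤ erwV X n ω * |erwPhat X n ω - p|} ≤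
      2 * Real.exp (-(n * x ^ 2) / 3) := by
  have hmgf := erwM_mgf μ ℱ X p hERW
  obtain ⟨hp0, hp1, hX, hmeas, hE⟩ := hERW
  have ha : |2 * p - 1| ≤ 1 := abs_le.2 ⟨by linarith, by linarith⟩
  set M := erwM X (2 * p - 1) (n - 1) with hMdef
  have hint : ∀ t : ℝ, Integrable (fun ω => Real.exp (t * M ω)) μ := by
    intro t
    refine Integrable.of_bound (C := Real.exp (|t| * ((n - 1 : ℕ) * 2))) ?_ ?_
    · exact (Real.measurable_exp.comp
        (((erwM_meas ℱ X _ hmeas (n - 1)).mono (ℱ.le _) le_rfl).const_mul t)).aestronglyMeasurable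
    · refine Eventually.of_forall fun ω => ?_
      rw [Real.norm_of_nonneg (Real.exp_pos _).le]
      apply Real.exp_le_exp.2
      refine (le_abs_self _).trans ?_
      rw [abs_mul]
      exact mul_le_mul_of_nonneg_left (erwM_bound X _ ha hX _ ω) (abs_nonneg _)
  have hsub : {ω | 2 * n * x ≤ erwV X n ω * |erwPhat X n ω - p|} ⊆
      {ω | n * x ≤ M ω} ∪ {ω | M ω ≤ -(n * x)} := by
    intro ω hω
    simp only [Set.mem_ofPred_eq, erwV_mul X hX p n hn ω] at hω
    have : n * x ≤ |M ω| := by rw [hMdef]; linarith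
    rcases le_abs.1 this with h | h
    · exact Or.inl h
    · exact Or.inr (by simp only [Set.mem_ofPred_eq]; linarith)
  have hcast : ((n - 1 : ℕ) : ℝ) = n - 1 := by
    rw [Nat.cast_sub (by omega)]; simp
  have key : Real.exp (-(n * x ^ 2)) * Real.exp (((n - 1 : ℕ) : ℝ) * (x ^ 2 / 2)) ≤
      Real.exp (-(n * x ^ 2) / 3) := by
    rw [← Real.exp_add]
    apply Real.exp_le_exp.2
    rw [hcast]
    have : 0 ≤ (n : ℝ) * x ^ 2 := by positivity
    nlinarith [sq_nonneg x]
  have hu : μ.real {ω | n * x ≤ M ω} ≤ Real.exp (-(n * x ^ 2) / 3) := by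
    refine (measure_ge_le_exp_mul_mgf (n * x) hx.le (hint x)).trans (le_trans ?_ key)
    have e : -x * (n * x) = -(n * x ^ 2) := by ring
    rw [e]
    exact mul_le_mul_of_nonneg_left (hmgf x (n - 1)) (Real.exp_pos _).le
  have hl : μ.real {ω | M ω ≤ -(n * x)} ≤ Real.exp (-(n * x ^ 2) / 3) := by
    refine (measure_le_le_exp_mul_mgf (-(n * x)) (neg_nonpos.2 hx.le) (hint (-x))).trans
      (le_trans ?_ key)
    have e : -(-x) * (-(n * x)) = -(n * x ^ 2) := by ring
    rw [e]
    have := hmgf (-x) (n - 1)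
    rw [neg_sq] at this
    exact mul_le_mul_of_nonneg_left this (Real.exp_pos _).le
  calc _ ≤ μ.real ({ω | n * x ≤ M ω} ∪ {ω | M ω ≤ -(n * x)}) := measureReal_mono hsub
    _ ≤ _ := measureReal_union_le _ _
    _ ≤ _ := by linarith

/-- Exact (non-asymptotic) confidence interval: for every `p ∈ [0,1]`, `α ∈ (0,1)` and
`n ≥ 2`, `P(|p̂_n - p| ≤ 2 √(3 n log(2/α)) / V_n) ≥ 1 - α`; equivalently, for every
`x > 0`, `P(V_n |p̂_n - p| ≥ 2 n x) ≤ 2 exp(-n x²/3)`. -/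
theorem erw_exact_confidence_interval
    {m0 : MeasurableSpace Ω} (μ : Measure Ω) [IsProbabilityMeasure μ]
    (ℱ : Filtration ℕ m0) (X : ℕ → Ω → ℝ) (p : ℝ)
    (hERW : IsERW μ ℱ X p) :
    ∀ n, 2 ≤ n →
      (∀ α : ℝ, 0 < α → α < 1 →
        1 - α ≤ (μ {ω | |erwPhat X n ω - p| ≤
          2 * Real.sqrt (3 * n * Real.log (2 / α)) / erwV X n ω}).toReal) ∧
      (∀ x : ℝ, 0 < x →
        (μ {ω | 2 * n * x ≤ erwV X n ω * |erwPhat X n ω - p|}).toReal ≤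
          2 * Real.exp (-(n * x ^ 2) / 3)) := by
  intro n hn
  refine ⟨fun α hα0 hα1 => ?_, fun x hx => erw_tail μ ℱ X p hERW n hn x hx⟩
  have hX := hERW.2.2.1
  have hn0 : (0 : ℝ) < n := by exact_mod_cast (by omega : 0 < n)
  have hL : 0 < Real.log (2 / α) := Real.log_pos (by rw [lt_div_iff₀ hα0]; linarith)
  set L := Real.log (2 / α) with hLdef
  have hx : 0 < Real.sqrt (3 * L / n) := Real.sqrt_pos.2 (by positivity)
  have ht := erw_tail μ ℱ X p hERW n hn _ hx
  have e1 : -(n * Real.sqrt (3 * L / n) ^ 2) / 3 = -L := by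
    rw [Real.sq_sqrt (by positivity)]
    field_simp
  have e2 : 2 * Real.exp (-L) = α := by
    rw [Real.exp_neg, hLdef, Real.exp_log (by positivity)]
    field_simp
  have e3 : (n : ℝ) * Real.sqrt (3 * L / n) = Real.sqrt (3 * n * L) := by
    have : 3 * n * L = (n : ℝ) ^ 2 * (3 * L / n) := by field_simp
    rw [this, Real.sqrt_mul (by positivity), Real.sqrt_sq hn0.le]
  rw [e1, e2] at ht
  set G := {ω | |erwPhat X n ω - p| ≤ 2 * Real.sqrt (3 * n * L) / erwV X n ω} with hG
  have hsub : (Set.univ : Set Ω) ⊆ G ∪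
      {ω | 2 * n * Real.sqrt (3 * L / n) ≤ erwV X n ω * |erwPhat X n ω - p|} := by
    intro ω _
    have hV : 0 < erwV X n ω := by
      have := erwT_pos X hX n hn ω
      unfold erwV; linarith
    rw [mul_assoc, e3]
    rcases le_total (erwV X n ω * |erwPhat X n ω - p|) (2 * Real.sqrt (3 * n * L)) with h | h
    · left
      rw [hG, Set.mem_ofPred_eq, le_div_iff₀ hV]
      linarith
    · exact Or.inr h
  have h1 := (measureReal_mono (μ := μ) hsub).trans (measureReal_union_le _ _)
  rw [probReal_univ] at h1
  change 1 - α ≤ μ.real G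
  linarith
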